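/- The element Δ := t⁻¹·id of PPU(b) is a singular strong order unit for the right-invariant lattice order with negative cone PPU(b)⁻: (a) Δ is normal, i.e. Δ(g ⊔ h) = Δg ⊔ Δh for all g, h ∈ PPU(b); (b) Δ is an order unit, i.e. for every g ∈ PPU(b) there exists m ∈ ℤ with g ≤ Δ^m; (c) Δ is singular, i.e. for all x, y ∈ PPU(b)⁻, if Δ ≤ xy then yx = x ⊓ y. Moreover, for every k-subspace U ⊆ V one has p_U p_{U*} = Δ, so the orthocomplementation g ↦ g⁻¹Δ on the interval [Δ, id] sends p_U to p_{U*}. -/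

import Mathlib

open Finsupp

variable (k : Type*) [Field k] (V : Type*) [AddCommGroup V] [Module k V]

/-- Multiplication by `t^n` on `V[t,t⁻¹] := ℤ →₀ V` (writing `v = ∑ᵢ tⁱ vᵢ` as the
finitely supported function `i ↦ vᵢ`). -/
noncomputable def shift (n : ℤ) : (ℤ →₀ V) ≃ₗ[k] (ℤ →₀ V) :=
  Finsupp.domLCongr (Equiv.addRight n)

/-- The coefficient of `tⁿ` of `b̃(v,w) = ∑ₙ tⁿ (∑ᵢ b(v_{i-n}, w_i))`. -/
noncomputable def Btilde (b : LinearMap.BilinForm k V) (n : ℤ) (v w : ℤ →₀ V) : k :=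
  w.sum fun i wi => b (v (i - n)) wi

/-- `φ` is a paraunitary transformation: an invertible `k[t,t⁻¹]`-linear
(i.e. `k`-linear and commuting with multiplication by `t`) endomorphism of
`V[t,t⁻¹]` preserving `b̃`. -/
def IsPU (b : LinearMap.BilinForm k V) (φ : (ℤ →₀ V) ≃ₗ[k] (ℤ →₀ V)) : Prop :=
  (∀ v, φ (shift k V 1 v) = shift k V 1 (φ v)) ∧
  ∀ (n : ℤ) (v w : ℤ →₀ V), Btilde k V b n (φ v) (φ w) = Btilde k V b n v w

/-- The specialization `t = 1` of a `k[t,t⁻¹]`-linear endomorphism `f = ∑ᵢ tⁱ fᵢ`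
of `V[t,t⁻¹]`, i.e. the endomorphism `ε₁(f) = ∑ᵢ fᵢ` of `V`. -/
noncomputable def eps (f : (ℤ →₀ V) →ₗ[k] (ℤ →₀ V)) : V →ₗ[k] V :=
  (Finsupp.lsum k fun _ : ℤ => (LinearMap.id : V →ₗ[k] V)) ∘ₗ f ∘ₗ Finsupp.lsingle 0

/-- `φ` is pure paraunitary: paraunitary and specializing to the identity at `t = 1`. -/
def IsPPU (b : LinearMap.BilinForm k V) (φ : (ℤ →₀ V) ≃ₗ[k] (ℤ →₀ V)) : Prop :=
  IsPU k V b φ ∧ eps k V (φ : (ℤ →₀ V) →ₗ[k] (ℤ →₀ V)) = LinearMap.id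

/-- `φ ∈ PPU(b)⁻`: pure paraunitary and all Laurent coefficients `φᵢ` for `i > 0` vanish. -/
def PPUneg (b : LinearMap.BilinForm k V) (φ : (ℤ →₀ V) ≃ₗ[k] (ℤ →₀ V)) : Prop :=
  IsPPU k V b φ ∧ ∀ (x : V) (i : ℤ), 0 < i → φ (Finsupp.single 0 x) i = 0

/-- The orthogonal complement `U* = {v ∈ V | b(u,v) = 0 for all u ∈ U}`. -/
def orthoC (b : LinearMap.BilinForm k V) (U : Submodule k V) : Submodule k V where
  carrier := {v | ∀ u ∈ U, b u v = 0}
  add_mem' := by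
    intro a c ha hc u hu
    simp only [Set.mem_setOf_eq] at *
    rw [map_add, ha u hu, hc u hu, add_zero]
  zero_mem' := by intro u _; simp
  smul_mem' := by
    intro c x hx u hu
    simp only [Set.mem_setOf_eq] at *
    rw [map_smul, hx u hu, smul_zero]

/-- The endomorphism `p_U = t⁻¹ π_{U*} + π_U` of `V[t,t⁻¹]`, where `π` is the
projection of `V` onto `U` along `U*` (so that `π_{U*} = 1 - π`). -/
noncomputable def pULin (π : V →ₗ[k] V) : (ℤ →₀ V) →ₗ[k] (ℤ →₀ V) :=
  (shift k V (-1)).toLinearMap ∘ₗ Finsupp.mapRange.linearMap (LinearMap.id - π) +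
    Finsupp.mapRange.linearMap π

variable {k V} in
/-- The right-invariant order on `PPU(b)` with negative cone `PPU(b)⁻`. -/
def PPUle (b : LinearMap.BilinForm k V) (φ ψ : (ℤ →₀ V) ≃ₗ[k] (ℤ →₀ V)) : Prop :=
  PPUneg k V b (φ * ψ⁻¹)

variable {k V} in
/-- `j` is the join of `g` and `h` in `(PPU(b), ≤)`. -/
def IsJoinC (b : LinearMap.BilinForm k V) (g h j : (ℤ →₀ V) ≃ₗ[k] (ℤ →₀ V)) : Prop :=
  IsPPU k V b j ∧ PPUle b g j ∧ PPUle b h j ∧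
    ∀ c, IsPPU k V b c → PPUle b g c → PPUle b h c → PPUle b j c

variable {k V} in
/-- `m` is the meet of `g` and `h` in `(PPU(b), ≤)`. -/
def IsMeetC (b : LinearMap.BilinForm k V) (g h m : (ℤ →₀ V) ≃ₗ[k] (ℤ →₀ V)) : Prop :=
  IsPPU k V b m ∧ PPUle b m g ∧ PPUle b m h ∧
    ∀ c, IsPPU k V b c → PPUle b c g → PPUle b c h → PPUle b c m

/-!
Preserving `b̃` means that `(φ⁻¹)_{-i}` is adjoint to `φ_i`, so the coefficients of an element of
the interval `[Δ, id]` live in degrees `-1` and `0`. As they sum to `1`, the element equals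
`t⁻¹(1 - π) + π`, and invariance of `b̃` makes `π` self-adjoint.

If `Δ ≤ xy`, then `x` and `y` lie in `[Δ, id]`, hence so do `Δx⁻¹ = t⁻¹(1 - π) + π` and
`Δy⁻¹ = t⁻¹(1 - ρ) + ρ`. The coefficient of `t` in `Δ(xy)⁻¹` is `ρπ`, so `ρπ = 0`, and `πρ = 0` by
taking adjoints. Expanding the products gives `x⁻¹y⁻¹ = x⁻¹ + y⁻¹ - 1 = y⁻¹x⁻¹`. Thus `x` and `y`
commute, and a lower bound `c` of `x` and `y` satisfies `c(yx)⁻¹ = cx⁻¹ + cy⁻¹ - c`, which has no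
coefficient of positive degree: `yx` is the meet.

Normality holds since `Δ` is central, and `Δ` is an order unit since the degrees of the
coefficients of an endomorphism are bounded when `V` has finite dimension.
-/

section

variable {k V} {b : LinearMap.BilinForm k V} {φ ψ χ : (ℤ →₀ V) ≃ₗ[k] (ℤ →₀ V)}

theorem shift_apply (n : ℤ) (v : ℤ →₀ V) (i : ℤ) : shift k V n v i = v (i - n) := by
  simp [shift, Finsupp.domLCongr_apply, sub_eq_add_neg]

theorem shift_single (n i : ℤ) (x : V) :
    shift k V n (single i x) = single (i + n) x := by
  simp [shift, Finsupp.domLCongr_apply]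

theorem shift_add (m n : ℤ) : shift k V (m + n) = shift k V m * shift k V n := by
  ext v i
  simp only [LinearEquiv.mul_apply, shift_apply, sub_sub]

theorem shift_zero : shift k V 0 = 1 := by
  ext v i
  simp [shift_apply]

theorem shift_neg (n : ℤ) : shift k V (-n) = (shift k V n)⁻¹ := by
  rw [eq_inv_iff_mul_eq_one, ← shift_add, neg_add_cancel, shift_zero]

theorem shift_zpow (n m : ℤ) : shift k V n ^ m = shift k V (m * n) := by
  induction m using Int.induction_on with
  | zero => rw [zpow_zero, zero_mul, shift_zero]
  | succ i ih => rw [zpow_add_one, ih, ← shift_add, add_one_mul]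
  | pred i ih => rw [zpow_sub_one, ih, ← shift_neg, ← shift_add, sub_one_mul, sub_eq_add_neg]

theorem commute_shift (hφ : Commute φ (shift k V 1)) (n : ℤ) :
    Commute φ (shift k V n) := by
  simpa only [shift_zpow, mul_one] using hφ.zpow_right n

/-- The Laurent coefficient `φ_i` of an automorphism `φ = ∑ᵢ tⁱ φ_i` of `V[t,t⁻¹]`, defined for
all `k`-linear `φ` as the `i`-th coefficient of `φ` restricted to the constants `V`. -/
noncomputable def laurentCoeff (φ : (ℤ →₀ V) ≃ₗ[k] (ℤ →₀ V)) (i : ℤ) : Module.End k V :=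
  lapply i ∘ₗ φ.toLinearMap ∘ₗ lsingle 0

theorem laurentCoeff_apply (i : ℤ) (x : V) : laurentCoeff φ i x = φ (single 0 x) i :=
  rfl

theorem apply_single (hφ : Commute φ (shift k V 1)) (n : ℤ) (x : V) :
    φ (single n x) = shift k V n (φ (single 0 x)) := by
  simpa only [LinearEquiv.mul_apply, shift_single, zero_add] using
    LinearEquiv.congr_fun (commute_shift hφ n).eq (single 0 x)

theorem apply_eq_sum_laurentCoeff (hφ : Commute φ (shift k V 1)) (v : ℤ →₀ V) (i : ℤ) :
    φ v i = v.sum fun j x => laurentCoeff φ (i - j) x := by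
  conv_lhs => rw [← v.sum_single, Finsupp.sum, map_sum, finsetSum_apply]
  refine Finset.sum_congr rfl fun j _ => ?_
  rw [apply_single hφ, shift_apply]
  rfl

theorem laurentCoeff_shift_mul (n i : ℤ) :
    laurentCoeff (shift k V n * φ) i = laurentCoeff φ (i - n) := by
  ext x
  simp only [laurentCoeff_apply, LinearEquiv.mul_apply, shift_apply]

theorem laurentCoeff_mul_eq_zero (hφ : Commute φ (shift k V 1)) {m n : ℤ}
    (hm : ∀ i, m < i → laurentCoeff φ i = 0) (hn : ∀ i, n < i → laurentCoeff ψ i = 0)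
    {i : ℤ} (hi : m + n < i) :
    laurentCoeff (φ * ψ) i = 0 := by
  ext x
  rw [laurentCoeff_apply, LinearEquiv.mul_apply, apply_eq_sum_laurentCoeff hφ]
  refine Finset.sum_eq_zero fun j hj => ?_
  have hjn : j ≤ n := not_lt.1 fun hnj =>
    mem_support_iff.1 hj (LinearMap.congr_fun (hn j hnj) x)
  exact LinearMap.congr_fun (hm (i - j) (by lia)) _

theorem exists_forall_lt_laurentCoeff_eq_zero [Module.Finite k V]
    (φ : (ℤ →₀ V) ≃ₗ[k] (ℤ →₀ V)) :
    ∃ M : ℤ, ∀ i, M < i → laurentCoeff φ i = 0 := by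
  obtain ⟨s, hs⟩ := Module.Finite.fg_top (R := k) (M := V)
  obtain ⟨M, hM⟩ := (s.biUnion fun x => (φ (single 0 x)).support).bddAbove
  refine ⟨M, fun i hi => LinearMap.ext_on hs fun x hx => ?_⟩
  by_contra hne
  have hmem : i ∈ s.biUnion fun x => (φ (single 0 x)).support :=
    Finset.mem_biUnion.2 ⟨x, hx, mem_support_iff.2 hne⟩
  exact hi.not_ge (hM hmem)

/-- The specialization `t = 1` of vectors, `∑ᵢ tⁱ vᵢ ↦ ∑ᵢ vᵢ`. It turns `ε₁(φ) = 1` into the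
invariance condition `evalOne ∘ φ = evalOne`, which is visibly stable under products and
inverses. -/
noncomputable def evalOne : (ℤ →₀ V) →ₗ[k] V :=
  lsum k fun _ : ℤ => (LinearMap.id : V →ₗ[k] V)

theorem evalOne_single (n : ℤ) (x : V) : evalOne (k := k) (single n x) = x := by
  simp [evalOne]

theorem evalOne_shift (n : ℤ) (v : ℤ →₀ V) :
    evalOne (k := k) (shift k V n v) = evalOne (k := k) v := by
  induction v using Finsupp.induction_linear with
  | zero => rw [map_zero]
  | add f g hf hg => rw [map_add, map_add, map_add, hf, hg]
  | single i x => rw [shift_single, evalOne_single, evalOne_single]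

theorem eps_eq_id_iff (hφ : Commute φ (shift k V 1)) :
    eps k V φ = LinearMap.id ↔ ∀ v, evalOne (k := k) (φ v) = evalOne (k := k) v := by
  refine ⟨fun h v => ?_, fun h => LinearMap.ext fun x => (h (single 0 x)).trans ?_⟩
  · induction v using Finsupp.induction_linear with
    | zero => rw [map_zero]
    | add f g hf hg => rw [map_add, map_add, map_add, hf, hg]
    | single i x =>
      rw [apply_single hφ, evalOne_shift, evalOne_single]
      exact LinearMap.congr_fun h x
  · exact evalOne_single 0 x

theorem Btilde_single_left (n : ℤ) (x : V) (w : ℤ →₀ V) :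
    Btilde k V b n (single 0 x) w = b x (w n) := by
  rw [Btilde, Finsupp.sum_eq_single n]
  · rw [sub_self, single_eq_same]
  · intro i _ hi
    rw [single_eq_of_ne (sub_ne_zero.2 hi), map_zero, LinearMap.zero_apply]
  · intro _
    exact map_zero _

theorem Btilde_single_right (n i : ℤ) (v : ℤ →₀ V) (x : V) :
    Btilde k V b n v (single i x) = b (v (i - n)) x := by
  simp [Btilde]

theorem Btilde_add_right (n : ℤ) (v w w' : ℤ →₀ V) :
    Btilde k V b n v (w + w') = Btilde k V b n v w + Btilde k V b n v w' :=
  sum_add_index' (fun _ => map_zero _) fun _ => map_add _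

theorem Btilde_shift_shift (m n : ℤ) (v w : ℤ →₀ V) :
    Btilde k V b n (shift k V m v) (shift k V m w) = Btilde k V b n v w := by
  induction w using Finsupp.induction_linear with
  | zero => rw [map_zero]; rfl
  | add f g hf hg => rw [map_add, Btilde_add_right, Btilde_add_right, hf, hg]
  | single i x =>
    rw [shift_single, Btilde_single_right, Btilde_single_right, shift_apply, add_sub_right_comm,
      add_sub_cancel_right]

theorem IsPU.commute_shift_one (hφ : IsPU k V b φ) : Commute φ (shift k V 1) :=
  LinearEquiv.ext hφ.1

theorem IsPPU.commute_shift (hφ : IsPPU k V b φ) (n : ℤ) : Commute φ (shift k V n) :=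
  _root_.commute_shift hφ.1.commute_shift_one n

theorem IsPPU.evalOne_apply (hφ : IsPPU k V b φ) (v : ℤ →₀ V) :
    evalOne (k := k) (φ v) = evalOne (k := k) v :=
  (eps_eq_id_iff hφ.1.commute_shift_one).1 hφ.2 v

theorem isPPU_of_evalOne_apply (hφ : IsPU k V b φ)
    (h : ∀ v, evalOne (k := k) (φ v) = evalOne (k := k) v) : IsPPU k V b φ :=
  ⟨hφ, (eps_eq_id_iff hφ.commute_shift_one).2 h⟩

theorem IsPPU.mul (hφ : IsPPU k V b φ) (hψ : IsPPU k V b ψ) : IsPPU k V b (φ * ψ) := by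
  refine isPPU_of_evalOne_apply ⟨fun v => ?_, fun n v w => ?_⟩ fun v => ?_
  · simp only [LinearEquiv.mul_apply, hφ.1.1, hψ.1.1]
  · simp only [LinearEquiv.mul_apply, hφ.1.2, hψ.1.2]
  · simp only [LinearEquiv.mul_apply, hφ.evalOne_apply, hψ.evalOne_apply]

theorem IsPPU.inv (hφ : IsPPU k V b φ) : IsPPU k V b φ⁻¹ := by
  have hcancel : ∀ v, φ (φ⁻¹ v) = v := φ.apply_symm_apply
  refine isPPU_of_evalOne_apply ⟨fun v => φ.injective ?_, fun n v w => ?_⟩ fun v => ?_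
  · rw [hφ.1.1, hcancel, hcancel]
  · rw [← hφ.1.2, hcancel, hcancel]
  · rw [← hφ.evalOne_apply, hcancel]

theorem isPPU_shift (n : ℤ) : IsPPU k V b (shift k V n) := by
  refine isPPU_of_evalOne_apply ⟨fun v => ?_, fun m => Btilde_shift_shift n m⟩ (evalOne_shift n)
  rw [← LinearEquiv.mul_apply, ← LinearEquiv.mul_apply, ← shift_add, ← shift_add, add_comm]

theorem PPUneg_iff :
    PPUneg k V b φ ↔ IsPPU k V b φ ∧ ∀ i, 0 < i → laurentCoeff φ i = 0 :=
  and_congr_right fun _ =>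
    ⟨fun h i hi => LinearMap.ext fun x => h x i hi, fun h x i hi => LinearMap.congr_fun (h i hi) x⟩

theorem PPUneg.laurentCoeff_eq_zero (hφ : PPUneg k V b φ) {i : ℤ} (hi : 0 < i) :
    laurentCoeff φ i = 0 :=
  (PPUneg_iff.1 hφ).2 i hi

theorem PPUneg.mul (hφ : PPUneg k V b φ) (hψ : PPUneg k V b ψ) : PPUneg k V b (φ * ψ) :=
  PPUneg_iff.2 ⟨hφ.1.mul hψ.1, fun _ hi =>
    laurentCoeff_mul_eq_zero hφ.1.1.commute_shift_one (fun _ => hφ.laurentCoeff_eq_zero)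
      (fun _ => hψ.laurentCoeff_eq_zero) (by rwa [add_zero])⟩

theorem PPUle.trans (hφψ : PPUle b φ ψ) (hψχ : PPUle b ψ χ) : PPUle b φ χ := by
  simpa only [PPUle, ← mul_assoc, inv_mul_cancel_right] using PPUneg.mul hφψ hψχ

theorem PPUle.mul_left {ζ : (ℤ →₀ V) ≃ₗ[k] (ℤ →₀ V)}
    (hcomm : ∀ g, IsPPU k V b g → Commute ζ g) (hφψ : PPUle b φ ψ) :
    PPUle b (ζ * φ) (ζ * ψ) := by
  have hconj : ζ * φ * (ζ * ψ)⁻¹ = φ * ψ⁻¹ := by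
    rw [mul_inv_rev, ← mul_assoc, mul_assoc ζ φ, (hcomm _ hφψ.1).mul_inv_cancel]
  rwa [PPUle, hconj]

theorem IsJoinC.mul_left {ζ : (ℤ →₀ V) ≃ₗ[k] (ℤ →₀ V)} (hζ : IsPPU k V b ζ)
    (hcomm : ∀ g, IsPPU k V b g → Commute ζ g) (h : IsJoinC b φ ψ χ) :
    IsJoinC b (ζ * φ) (ζ * ψ) (ζ * χ) := by
  obtain ⟨hχ, hφχ, hψχ, hleast⟩ := h
  refine ⟨hζ.mul hχ, hφχ.mul_left hcomm, hψχ.mul_left hcomm, fun c hc hφc hψc => ?_⟩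
  have le_inv_mul {g} (hg : PPUle b (ζ * g) c) : PPUle b g (ζ⁻¹ * c) := by
    simpa only [inv_mul_cancel_left] using hg.mul_left fun g hg => (hcomm g hg).inv_left
  simpa only [mul_inv_cancel_left] using
    (hleast _ (hζ.inv.mul hc) (le_inv_mul hφc) (le_inv_mul hψc)).mul_left hcomm

theorem IsPPU.exists_le_shift_zpow [Module.Finite k V] (hφ : IsPPU k V b φ) :
    ∃ m : ℤ, PPUle b φ (shift k V (-1) ^ m) := by
  obtain ⟨M, hM⟩ := exists_forall_lt_laurentCoeff_eq_zero φ
  refine ⟨-M, ?_⟩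
  rw [PPUle, shift_zpow, ← shift_neg, (hφ.commute_shift _).eq, PPUneg_iff]
  refine ⟨(isPPU_shift _).mul hφ, fun i hi => ?_⟩
  rw [laurentCoeff_shift_mul]
  exact hM _ (by lia)

theorem IsPU.isAdjointPair_laurentCoeff (hφ : IsPU k V b φ) (n : ℤ) :
    b.IsAdjointPair b (laurentCoeff φ⁻¹ (-n)) (laurentCoeff φ n) := by
  intro v w
  have h := hφ.2 n (φ⁻¹ (single 0 v)) (single 0 w)
  rw [show φ (φ⁻¹ (single 0 v)) = single 0 v from φ.apply_symm_apply _, Btilde_single_left,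
    Btilde_single_right, zero_sub] at h
  exact h.symm

theorem IsPU.laurentCoeff_inv_eq_zero (hb : b.SeparatingLeft) (hφ : IsPU k V b φ) {n : ℤ}
    (hn : laurentCoeff φ n = 0) :
    laurentCoeff φ⁻¹ (-n) = 0 := by
  ext v
  refine hb _ fun w => ?_
  rw [hφ.isAdjointPair_laurentCoeff n v w, hn, LinearMap.zero_apply, map_zero]

theorem pULin_single (π : Module.End k V) (i : ℤ) (x : V) :
    pULin k V π (single i x) = single (i - 1) (x - π x) + single i (π x) := by
  simp [pULin, shift_single, sub_eq_add_neg]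

theorem shift_pULin (π : Module.End k V) (n : ℤ) (v : ℤ →₀ V) :
    pULin k V π (shift k V n v) = shift k V n (pULin k V π v) := by
  induction v using Finsupp.induction_linear with
  | zero => simp only [map_zero]
  | add f g hf hg => simp only [map_add, hf, hg]
  | single i x => simp only [shift_single, pULin_single, map_add, sub_add_eq_add_sub]

theorem pULin_pULin_of_mul_eq_zero {π ρ : Module.End k V} (h : ρ * π = 0) (v : ℤ →₀ V) :
    pULin k V ρ (pULin k V π v) =
      shift k V (-1) (pULin k V ρ v + pULin k V π v - shift k V (-1) v) := by
  induction v using Finsupp.induction_linear with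
  | zero => simp only [map_zero, add_zero, sub_zero]
  | add f g hf hg => simp only [map_add, map_sub, hf, hg]; abel
  | single i x =>
    have hx : ρ (π x) = 0 := LinearMap.congr_fun h x
    simp only [pULin_single, shift_single, map_add, map_sub, hx, single_sub, single_zero,
      ← sub_eq_add_neg]
    abel

theorem pULin_add_pULin_one_sub (π : Module.End k V) (v : ℤ →₀ V) :
    pULin k V π v + pULin k V (1 - π) v = shift k V (-1) v + v := by
  induction v using Finsupp.induction_linear with
  | zero => simp only [map_zero, add_zero]
  | add f g hf hg => rw [map_add, map_add, add_add_add_comm, hf, hg, map_add]; abel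
  | single i x =>
    simp only [pULin_single, shift_single, LinearMap.sub_apply, Module.End.one_apply, single_sub,
      ← sub_eq_add_neg]
    abel

theorem pULin_pULin_one_sub {π : Module.End k V} (hπ : IsIdempotentElem π) (v : ℤ →₀ V) :
    pULin k V π (pULin k V (1 - π) v) = shift k V (-1) v := by
  rw [pULin_pULin_of_mul_eq_zero hπ.mul_one_sub_self, pULin_add_pULin_one_sub,
    add_sub_cancel_left]

theorem laurentCoeff_mul_zero_of_eq_pULin {π ρ : Module.End k V}
    (hφ : φ.toLinearMap = pULin k V π) (hψ : ψ.toLinearMap = pULin k V ρ) :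
    laurentCoeff (φ * ψ) 0 = π * ρ := by
  ext x
  have hprod : (φ * ψ) (single 0 x) = pULin k V π (pULin k V ρ (single 0 x)) := by
    rw [← hφ, ← hψ]; rfl
  simp [laurentCoeff_apply, hprod, pULin_single]

theorem IsPU.isSelfAdjoint_of_eq_pULin (hφ : IsPU k V b φ) {π : Module.End k V}
    (hπ : φ.toLinearMap = pULin k V π) : b.IsSelfAdjoint π := by
  have hφ_single (x : V) : φ (single 0 x) = single (-1) (x - π x) + single 0 (π x) :=
    (LinearMap.congr_fun hπ _).trans (pULin_single π 0 x)
  have hBtilde (n : ℤ) (v w : V) :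
      b (φ (single 0 v) (-1 - n)) (w - π w) + b (φ (single 0 v) (-n)) (π w) =
        b (single (0 : ℤ) v (-n)) w := by
    simpa only [hφ_single w, Btilde_add_right, Btilde_single_right, zero_sub] using
      hφ.2 n (single 0 v) (single 0 w)
  intro v w
  have hone : b (v - π v) (π w) = 0 := by
    simpa [hφ_single, single_apply, -map_sub] using hBtilde 1 v w
  have hneg : b (π v) (w - π w) = 0 := by
    simpa [hφ_single, single_apply, -map_sub] using hBtilde (-1) v w
  rw [map_sub, LinearMap.sub_apply, sub_eq_zero] at hone
  rw [map_sub, sub_eq_zero] at hneg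
  exact hneg.trans hone.symm

theorem IsPPU.eq_pULin (hφ : IsPPU k V b φ)
    (h : ∀ i, i ≠ -1 → i ≠ 0 → laurentCoeff φ i = 0) :
    φ.toLinearMap = pULin k V (laurentCoeff φ 0) := by
  have hcoeff (x : V) :
      φ (single 0 x) = single (-1) (laurentCoeff φ (-1) x) + single 0 (laurentCoeff φ 0 x) := by
    ext i
    by_cases hneg : i = -1
    · simp [hneg, laurentCoeff_apply]
    by_cases hzero : i = 0
    · simp [hzero, laurentCoeff_apply]
    rw [Finsupp.add_apply, single_eq_of_ne hneg, single_eq_of_ne hzero, add_zero]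
    exact LinearMap.congr_fun (h i hneg hzero) x
  have hsum (x : V) : laurentCoeff φ (-1) x = x - laurentCoeff φ 0 x := by
    have heval := hφ.evalOne_apply (single 0 x)
    rw [hcoeff, map_add, evalOne_single, evalOne_single, evalOne_single] at heval
    exact eq_sub_of_add_eq heval
  refine lhom_ext fun i x => ?_
  rw [LinearEquiv.coe_coe, apply_single hφ.1.commute_shift_one, hcoeff, hsum, pULin_single, map_add,
    shift_single, shift_single, zero_add, neg_add_eq_sub]

/-- The interval `[Δ, id]` of `PPU(b)`, where `Δ = t⁻¹·id`. -/
def deltaInterval (b : LinearMap.BilinForm k V) : Set ((ℤ →₀ V) ≃ₗ[k] (ℤ →₀ V)) :=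
  {φ | PPUneg k V b φ ∧ PPUle b (shift k V (-1)) φ}

theorem shift_mul_inv_mem_deltaInterval (hφ : φ ∈ deltaInterval b) :
    shift k V (-1) * φ⁻¹ ∈ deltaInterval b := by
  refine ⟨hφ.2, ?_⟩
  rw [PPUle, mul_inv_rev, inv_inv, ← mul_assoc, ← (hφ.1.1.commute_shift (-1)).eq,
    mul_inv_cancel_right]
  exact hφ.1

theorem left_mem_deltaInterval_of_shift_le_mul (hφ : PPUneg k V b φ) (hψ : PPUneg k V b ψ)
    (h : PPUle b (shift k V (-1)) (φ * ψ)) : φ ∈ deltaInterval b := by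
  refine ⟨hφ, ?_⟩
  simpa only [PPUle, mul_inv_rev, ← mul_assoc, (hψ.1.commute_shift (-1)).eq,
    mul_inv_cancel_right] using hψ.mul h

theorem right_mem_deltaInterval_of_shift_le_mul (hφ : PPUneg k V b φ) (hψ : PPUneg k V b ψ)
    (h : PPUle b (shift k V (-1)) (φ * ψ)) : ψ ∈ deltaInterval b :=
  ⟨hψ, h.trans (by rwa [PPUle, mul_inv_cancel_right])⟩

theorem exists_eq_pULin_of_mem_deltaInterval (hb : b.SeparatingLeft) (hφ : φ ∈ deltaInterval b) :
    ∃ π : Module.End k V, b.IsSelfAdjoint π ∧ φ.toLinearMap = pULin k V π := by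
  have hlow (i : ℤ) (hi : i < -1) : laurentCoeff φ i = 0 := by
    have hinv : laurentCoeff φ⁻¹ (-i) = 0 := by
      have hshift := PPUneg.laurentCoeff_eq_zero hφ.2 (i := -i - 1) (by lia)
      rwa [laurentCoeff_shift_mul, sub_neg_eq_add, sub_add_cancel] at hshift
    simpa only [inv_inv, neg_neg] using hφ.1.1.inv.1.laurentCoeff_inv_eq_zero hb hinv
  have hπ := hφ.1.1.eq_pULin fun i hneg hzero =>
    (lt_or_gt_of_ne hzero).elim (fun hi => hlow i (by lia)) hφ.1.laurentCoeff_eq_zero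
  exact ⟨_, hφ.1.1.1.isSelfAdjoint_of_eq_pULin hπ, hπ⟩

theorem mul_eq_zero_of_isSelfAdjoint (hb : b.SeparatingLeft) {π ρ : Module.End k V}
    (hπ : b.IsSelfAdjoint π) (hρ : b.IsSelfAdjoint ρ) (h : ρ * π = 0) : π * ρ = 0 := by
  ext v
  refine hb _ fun w => ?_
  have hw : ρ (π w) = 0 := LinearMap.congr_fun h w
  rw [Module.End.mul_apply, hπ, hρ, hw, map_zero]

theorem inv_apply_inv_apply_of_mul_eq_zero {π ρ : Module.End k V} (h : ρ * π = 0)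
    (hφ : (shift k V (-1) * φ⁻¹).toLinearMap = pULin k V π)
    (hψ : (shift k V (-1) * ψ⁻¹).toLinearMap = pULin k V ρ) (v : ℤ →₀ V) :
    ψ⁻¹ (φ⁻¹ v) = ψ⁻¹ v + φ⁻¹ v - v := by
  have hφv (u : ℤ →₀ V) : pULin k V π u = shift k V (-1) (φ⁻¹ u) := (LinearMap.congr_fun hφ u).symm
  have hψv (u : ℤ →₀ V) : pULin k V ρ u = shift k V (-1) (ψ⁻¹ u) := (LinearMap.congr_fun hψ u).symm
  apply (shift k V (-1)).injective
  apply (shift k V (-1)).injective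
  rw [← hψv, ← shift_pULin, ← hφv, pULin_pULin_of_mul_eq_zero h, hφv, hψv, ← map_add, ← map_sub]

theorem isMeetC_mul_of_inv_apply_inv_apply (hφ : PPUneg k V b φ) (hψ : PPUneg k V b ψ)
    (hcomm : Commute φ ψ) (h : ∀ v, φ⁻¹ (ψ⁻¹ v) = φ⁻¹ v + ψ⁻¹ v - v) :
    IsMeetC b φ ψ (ψ * φ) := by
  refine ⟨hψ.1.mul hφ.1, ?_, ?_, fun c hc hcφ hcψ => ?_⟩
  · rwa [PPUle, mul_inv_cancel_right]
  · rwa [PPUle, ← hcomm.eq, mul_inv_cancel_right]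
  have hc_neg : PPUneg k V b c := by
    simpa only [inv_mul_cancel_right] using PPUneg.mul hcφ hφ
  refine ⟨hc.mul (hψ.1.mul hφ.1).inv, fun x i hi => ?_⟩
  have hcφ_coeff : c (φ⁻¹ (single 0 x)) i = 0 := hcφ.2 x i hi
  have hcψ_coeff : c (ψ⁻¹ (single 0 x)) i = 0 := hcψ.2 x i hi
  rw [mul_inv_rev, LinearEquiv.mul_apply, LinearEquiv.mul_apply, h, map_sub, map_add,
    Finsupp.sub_apply, Finsupp.add_apply, hcφ_coeff, hcψ_coeff, hc_neg.2 x i hi, add_zero, sub_zero]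

theorem mul_eq_zero_of_shift_le_mul {π ρ : Module.End k V} (hψ : IsPPU k V b ψ)
    (h : PPUle b (shift k V (-1)) (φ * ψ))
    (hφπ : (shift k V (-1) * φ⁻¹).toLinearMap = pULin k V π)
    (hψρ : (shift k V (-1) * ψ⁻¹).toLinearMap = pULin k V ρ) : ρ * π = 0 := by
  have hprod : (shift k V (-1) * ψ⁻¹) * (shift k V (-1) * φ⁻¹) =
      shift k V (-1) * (shift k V (-1) * (φ * ψ)⁻¹) := by
    rw [mul_assoc, ← mul_assoc ψ⁻¹, (hψ.inv.commute_shift (-1)).eq, mul_inv_rev, mul_assoc]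
  calc ρ * π = laurentCoeff ((shift k V (-1) * ψ⁻¹) * (shift k V (-1) * φ⁻¹)) 0 :=
        (laurentCoeff_mul_zero_of_eq_pULin hψρ hφπ).symm
    _ = laurentCoeff (shift k V (-1) * (φ * ψ)⁻¹) 1 := by
        rw [hprod, laurentCoeff_shift_mul, zero_sub, neg_neg]
    _ = 0 := PPUneg.laurentCoeff_eq_zero h one_pos

theorem isMeetC_mul_of_shift_le_mul (hb : b.SeparatingLeft) (hφ : PPUneg k V b φ)
    (hψ : PPUneg k V b ψ) (h : PPUle b (shift k V (-1)) (φ * ψ)) : IsMeetC b φ ψ (ψ * φ) := by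
  obtain ⟨π, hπ, hφπ⟩ := exists_eq_pULin_of_mem_deltaInterval hb <|
    shift_mul_inv_mem_deltaInterval (left_mem_deltaInterval_of_shift_le_mul hφ hψ h)
  obtain ⟨ρ, hρ, hψρ⟩ := exists_eq_pULin_of_mem_deltaInterval hb <|
    shift_mul_inv_mem_deltaInterval (right_mem_deltaInterval_of_shift_le_mul hφ hψ h)
  have hρπ : ρ * π = 0 := mul_eq_zero_of_shift_le_mul hψ.1 h hφπ hψρ
  have hπρ : π * ρ = 0 := mul_eq_zero_of_isSelfAdjoint hb hπ hρ hρπ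
  have hψφ := inv_apply_inv_apply_of_mul_eq_zero hρπ hφπ hψρ
  have hφψ := inv_apply_inv_apply_of_mul_eq_zero hπρ hψρ hφπ
  have hcomm : Commute φ⁻¹ ψ⁻¹ := LinearEquiv.ext fun v => by
    rw [LinearEquiv.mul_apply, LinearEquiv.mul_apply, hφψ, hψφ, add_comm (φ⁻¹ v)]
  exact isMeetC_mul_of_inv_apply_inv_apply hφ hψ (Commute.inv_inv_iff.1 hcomm) hφψ

/-- `π` is the projection onto `U` along `W`. Uniqueness of the decomposition is not part of
the definition: `U` and `W` span `V` but may intersect. -/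
def IsProjAlong (π : Module.End k V) (U W : Submodule k V) : Prop :=
  ∀ v, π v ∈ U ∧ v - π v ∈ W

namespace IsProjAlong

variable {π ρ : Module.End k V} {U U' W : Submodule k V}

theorem one_sub (hπ : IsProjAlong π U W) : IsProjAlong (1 - π) W U := fun v =>
  ⟨(hπ v).2, by simpa using (hπ v).1⟩

theorem mono_right (hπ : IsProjAlong π W U) (h : U ≤ U') : IsProjAlong π W U' := fun v =>
  ⟨(hπ v).1, h (hπ v).2⟩

theorem eq (hUW : Disjoint U W) (hπ : IsProjAlong π U W) (hρ : IsProjAlong ρ U W) : π = ρ := by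
  ext v
  refine sub_eq_zero.1 (Submodule.disjoint_def.1 hUW _ (sub_mem (hπ v).1 (hρ v).1) ?_)
  simpa using sub_mem (hρ v).2 (hπ v).2

theorem isIdempotentElem (hUW : Disjoint U W) (hπ : IsProjAlong π U W) : IsIdempotentElem π := by
  refine eq hUW (fun v => ⟨(hπ (π v)).1, ?_⟩) hπ
  simpa using add_mem (hπ v).2 (hπ (π v)).2

theorem disjoint_orthoC (hrefl : b.IsRefl) (hb : b.SeparatingLeft)
    (hπ : IsProjAlong π U (orthoC k V b U)) : Disjoint U (orthoC k V b U) := by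
  refine Submodule.disjoint_def.2 fun x hx hx' => hb x fun v => ?_
  rw [← add_sub_cancel (π v) v, map_add, hrefl _ _ (hx' _ (hπ v).1), (hπ v).2 x hx, add_zero]

theorem eq_one_sub (hrefl : b.IsRefl) (hb : b.SeparatingLeft)
    (hπ : IsProjAlong π U (orthoC k V b U))
    (hρ : IsProjAlong ρ (orthoC k V b U) (orthoC k V b (orthoC k V b U))) : ρ = 1 - π :=
  hρ.eq (hρ.disjoint_orthoC hrefl hb)
    (hπ.one_sub.mono_right (LinearMap.BilinForm.le_orthogonal_orthogonal hrefl))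

end IsProjAlong

theorem mul_eq_shift_of_eq_pULin (hrefl : b.IsRefl) (hb : b.SeparatingLeft) {U : Submodule k V}
    {π ρ : Module.End k V} (hπ : IsProjAlong π U (orthoC k V b U))
    (hρ : IsProjAlong ρ (orthoC k V b U) (orthoC k V b (orthoC k V b U)))
    (hφ : φ.toLinearMap = pULin k V π)
    (hψ : ψ.toLinearMap = pULin k V ρ) : φ * ψ = shift k V (-1) := by
  have hidem : IsIdempotentElem π := hπ.isIdempotentElem (hπ.disjoint_orthoC hrefl hb)
  rw [hπ.eq_one_sub hrefl hb hρ] at hψ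
  ext1 v
  calc φ (ψ v) = pULin k V π (pULin k V (1 - π) v) := by rw [← hφ, ← hψ]; rfl
    _ = shift k V (-1) v := pULin_pULin_one_sub hidem v

theorem stmt19_general [FiniteDimensional k V] (b : LinearMap.BilinForm k V)
    (hrefl : b.IsRefl) (hb : b.SeparatingLeft) :
    (∀ g h j : (ℤ →₀ V) ≃ₗ[k] (ℤ →₀ V), IsJoinC b g h j →
      IsJoinC b (shift k V (-1) * g) (shift k V (-1) * h) (shift k V (-1) * j)) ∧
    (∀ g : (ℤ →₀ V) ≃ₗ[k] (ℤ →₀ V), IsPPU k V b g →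
      ∃ m : ℤ, PPUle b g (shift k V (-1) ^ m)) ∧
    (∀ x y : (ℤ →₀ V) ≃ₗ[k] (ℤ →₀ V), PPUneg k V b x → PPUneg k V b y →
      PPUle b (shift k V (-1)) (x * y) → IsMeetC b x y (y * x)) ∧
    (∀ (U : Submodule k V) (πU πUs : V →ₗ[k] V),
      (∀ v : V, πU v ∈ U ∧ v - πU v ∈ orthoC k V b U) →
      (∀ v : V, πUs v ∈ orthoC k V b U ∧ v - πUs v ∈ orthoC k V b (orthoC k V b U)) →
      ∀ pU pUs : (ℤ →₀ V) ≃ₗ[k] (ℤ →₀ V),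
        (pU : (ℤ →₀ V) →ₗ[k] (ℤ →₀ V)) = pULin k V πU →
        (pUs : (ℤ →₀ V) →ₗ[k] (ℤ →₀ V)) = pULin k V πUs →
        pU * pUs = shift k V (-1) ∧ pU⁻¹ * shift k V (-1) = pUs) := by
  refine ⟨fun g h j hj => ?normal, fun g hg => ?orderUnit, fun x y hx hy h => ?singular,
    fun U πU πUs hπU hπUs pU pUs hpU hpUs => ?orthocomplement⟩
  case normal => exact hj.mul_left (isPPU_shift _) fun g hg => (hg.commute_shift _).symm
  case orderUnit => exact hg.exists_le_shift_zpow
  case singular => exact isMeetC_mul_of_shift_le_mul hb hx hy h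
  case orthocomplement =>
    have hΔ := mul_eq_shift_of_eq_pULin hrefl hb hπU hπUs hpU hpUs
    exact ⟨hΔ, inv_mul_eq_of_eq_mul hΔ.symm⟩

end

/-- `Δ = t⁻¹·id` is a singular strong order unit of `PPU(b)`:
it is normal, an order unit, and singular; moreover `p_U p_{U*} = Δ`, so the
orthocomplementation `g ↦ g⁻¹Δ` of the interval `[Δ, id]` sends `p_U` to `p_{U*}`. -/
theorem stmt19 [FiniteDimensional k V] (b : LinearMap.BilinForm k V)
    (hsymm : ∀ v w : V, b v w = b w v)
    (haniso : ∀ v : V, b v v = 0 → v = 0) :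
    (∀ g h j : (ℤ →₀ V) ≃ₗ[k] (ℤ →₀ V), IsPPU k V b g → IsPPU k V b h →
      IsJoinC b g h j →
      IsJoinC b (shift k V (-1) * g) (shift k V (-1) * h) (shift k V (-1) * j)) ∧
    (∀ g : (ℤ →₀ V) ≃ₗ[k] (ℤ →₀ V), IsPPU k V b g →
      ∃ m : ℤ, PPUle b g (shift k V (-1) ^ m)) ∧
    (∀ x y : (ℤ →₀ V) ≃ₗ[k] (ℤ →₀ V), PPUneg k V b x → PPUneg k V b y →
      PPUle b (shift k V (-1)) (x * y) → IsMeetC b x y (y * x)) ∧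
    (∀ (U : Submodule k V) (πU πUs : V →ₗ[k] V),
      (∀ v : V, πU v ∈ U ∧ v - πU v ∈ orthoC k V b U) →
      (∀ v : V, πUs v ∈ orthoC k V b U ∧ v - πUs v ∈ orthoC k V b (orthoC k V b U)) →
      ∀ pU pUs : (ℤ →₀ V) ≃ₗ[k] (ℤ →₀ V),
        (pU : (ℤ →₀ V) →ₗ[k] (ℤ →₀ V)) = pULin k V πU →
        (pUs : (ℤ →₀ V) →ₗ[k] (ℤ →₀ V)) = pULin k V πUs →
        pU * pUs = shift k V (-1) ∧ pU⁻¹ * shift k V (-1) = pUs) := by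
  obtain ⟨hnormal, hrest⟩ := stmt19_general b (fun v w h => (hsymm w v).trans h)
    (fun v h => haniso v (h v))
  exact ⟨fun g h j _ _ => hnormal g h j, hrest⟩
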